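/- arXiv:1402.5148 — 2 statements merged into one kernel-verified Lean document; each statement's English description precedes it below -/
import Mathlib

section
/- Let p be an odd prime, let ε ∈ {−1,1}, and let m and n be positive integers with m < n, p ∤ m, p ∤ n, and p² ∣ D_ε(n,m). Let x be the unique p-th power modulo p² satisfying x ≡ 1 − m·n⁻¹ (mod p), and let k be a positive integer with k ≡ m − n (mod p−1). Then x^k ≡ −ε·(1−x)^m (mod p²); in particular x − 1 is also a p-th power modulo p², so x − 1 and x are consecutive nonzero p-th powers modulo p². -/
/-- `D_ε(n,m) = n^n + ε·(n−m)^(n−m)·m^m` for `ε ∈ {−1,1}` and integers `n > m ≥ 1`. -/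
def trinomialD (ε : ℤ) (n m : ℕ) : ℤ :=
  (n : ℤ) ^ n + ε * ((n - m : ℕ) : ℤ) ^ (n - m) * (m : ℤ) ^ m

/-!
With `l = n - m`, the polynomial `X ^ l * (n - X) ^ m` has a critical point at `l`, where its value
is `l ^ l * m ^ m`. By Taylor expansion its value modulo `q ^ 2` therefore does not change when `l`
is replaced by any `t ≡ l` modulo `q`. Taking `t = n * x` and comparing with
`D_ε(n, m) ≡ 0` gives `ε * x ^ l * (1 - x) ^ m ≡ -1` modulo `q ^ 2`, where `x ^ l` is inverse to
`x ^ k` if `q = p`. Hence `(1 - x) ^ m` is a `p`-th power modulo `p ^ 2`, and since `p ∤ m` so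
is `1 - x`: the group of units modulo `p ^ 2` has exponent `p` modulo its `p`-th powers.
-/

open Polynomial in
theorem sq_dvd_eval_sub_of_dvd_derivative {R : Type*} [CommRing R] (f : R[X]) {q a t : R}
    (ht : q ∣ t - a) (hf : q ∣ f.derivative.eval a) : q ^ 2 ∣ f.eval t - f.eval a := by
  obtain ⟨s, hs⟩ := ht
  obtain ⟨d, hd⟩ := hf
  obtain ⟨c, hc⟩ := binomExpansion f a (t - a)
  rw [add_sub_cancel, hs, hd] at hc
  exact ⟨d * s + c * s ^ 2, by rw [hc]; ring⟩

open Polynomial in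
theorem sq_dvd_pow_mul_add_sub_pow_sub {R : Type*} [CommRing R] {q t : R} {a b : ℕ}
    (ha : a ≠ 0) (hb : b ≠ 0) (ht : q ∣ t - a) :
    q ^ 2 ∣ t ^ a * (a + b - t) ^ b - a ^ a * b ^ b := by
  let f : R[X] := X ^ a * (C (a + b : R) - X) ^ b
  have critical : f.derivative.eval (a : R) = 0 := calc
    _ = a * (a : R) ^ (a - 1) * b ^ b - a ^ a * (b * (b : R) ^ (b - 1)) := by
      simp only [f, map_add, map_natCast, derivative_mul, derivative_pow, derivative_X, mul_one,
        derivative_sub, derivative_natCast, add_zero, zero_sub, mul_neg, eval_add,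
        eval_mul, eval_natCast, eval_pow, eval_X, eval_sub, add_sub_cancel_left, eval_neg]
      ring
    _ = 0 := by rw [mul_pow_sub_one ha, mul_pow_sub_one hb, sub_self]
  simpa [f] using sq_dvd_eval_sub_of_dvd_derivative f ht (critical ▸ dvd_zero q)

theorem mul_pow_mul_one_sub_pow_modEq_neg_one {q ε x : ℤ} {m n : ℕ} (hm : m ≠ 0) (hmn : m < n)
    (hn : IsCoprime q n) (hD : q ^ 2 ∣ trinomialD ε n m) (hx : n * x ≡ n - m [ZMOD q]) :
    ε * (x ^ (n - m) * (1 - x) ^ m) ≡ -1 [ZMOD q ^ 2] := by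
  obtain ⟨l, rfl⟩ := Nat.exists_eq_add_of_le' hmn.le
  have hl : l ≠ 0 := by lia
  rw [trinomialD, Nat.add_sub_cancel] at hD
  rw [Nat.add_sub_cancel]
  push_cast at hn hD hx
  have hx' : q ∣ (l + m) * x - l := by simpa using hx.symm.dvd
  have hvalue := sq_dvd_pow_mul_add_sub_pow_sub hl hm hx'
  have hmul : q ^ 2 ∣ (l + m : ℤ) ^ (l + m) * (ε * (x ^ l * (1 - x) ^ m) - -1) := by
    have hfactor : (l + m - (l + m) * x : ℤ) = (l + m) * (1 - x) := by ring
    rw [hfactor, mul_pow, mul_pow] at hvalue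
    refine (dvd_add (hvalue.mul_left ε) hD).trans (dvd_of_eq ?_)
    ring
  exact (Int.modEq_of_dvd (hn.pow.dvd_of_dvd_mul_left hmul)).symm

theorem pow_modEq_neg_mul_one_sub_pow {q ε x : ℤ} {m n k : ℕ} (hm : m ≠ 0) (hmn : m < n)
    (hn : IsCoprime q n) (hD : q ^ 2 ∣ trinomialD ε n m) (hx : n * x ≡ n - m [ZMOD q])
    (hinv : x ^ k * x ^ (n - m) ≡ 1 [ZMOD q ^ 2]) :
    x ^ k ≡ -ε * (1 - x) ^ m [ZMOD q ^ 2] := by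
  have hneg_one := mul_pow_mul_one_sub_pow_modEq_neg_one hm hmn hn hD hx
  calc
    x ^ k = -x ^ k * -1 := by ring
    _ ≡ -x ^ k * (ε * (x ^ (n - m) * (1 - x) ^ m)) [ZMOD q ^ 2] := hneg_one.symm.mul_left _
    _ = x ^ k * x ^ (n - m) * (-ε * (1 - x) ^ m) := by ring
    _ ≡ 1 * (-ε * (1 - x) ^ m) [ZMOD q ^ 2] := hinv.mul_right _
    _ = -ε * (1 - x) ^ m := one_mul _

theorem pow_sub_one_modEq_one_of_pow {p r m : ℕ} (hp : p.Prime) (hpm : ¬ p ∣ m) {y : ℤ}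
    (hy : (y ^ m) ^ (p - 1) ≡ 1 [ZMOD (p : ℤ) ^ r]) : y ^ (p - 1) ≡ 1 [ZMOD (p : ℤ) ^ r] := by
  rw [← Nat.cast_pow, ← ZMod.intCast_eq_intCast_iff] at hy ⊢
  push_cast at hy ⊢
  rw [pow_right_comm] at hy
  have hm : m ≠ 0 := by rintro rfl; exact hpm (dvd_zero p)
  obtain ⟨u, hu⟩ : IsUnit (y : ZMod (p ^ r)) := by
    refine IsUnit.of_pow_eq_one ((pow_mul _ _ _).trans hy) (mul_ne_zero ?_ hm)
    exact Nat.sub_ne_zero_of_lt hp.one_lt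
  have htotient : (p ^ r).totient ∣ (p - 1) * p ^ r := by
    cases r with
    | zero => simp
    | succ r =>
      rw [Nat.totient_prime_pow_succ hp, mul_comm]
      exact mul_dvd_mul_left _ (pow_dvd_pow p r.le_succ)
  have hpow : ((y : ZMod (p ^ r)) ^ (p - 1)) ^ p ^ r = 1 := by
    obtain ⟨d, hd⟩ := htotient
    rw [← pow_mul, hd, ← hu, ← Units.val_pow_eq_pow_val, pow_mul, ZMod.pow_totient, one_pow,
      Units.val_one]
  exact (pow_eq_one_iff_of_coprime ((hp.coprime_iff_not_dvd.mpr hpm).pow_left r)).mp ⟨hpow, hy⟩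

theorem not_dvd_and_exists_modEq_pow {p : ℕ} (hp : p.Prime) {y : ℤ}
    (hy : y ^ (p - 1) ≡ 1 [ZMOD (p : ℤ) ^ 2]) :
    ¬ (p : ℤ) ∣ y ∧ ∃ a : ℤ, y ≡ a ^ p [ZMOD (p : ℤ) ^ 2] := by
  constructor
  · intro hpy
    have hpow : (p : ℤ) ∣ y ^ (p - 1) := dvd_pow hpy (Nat.sub_ne_zero_of_lt hp.one_lt)
    have hone := (hy.of_dvd (dvd_pow_self _ two_ne_zero)).dvd_iff.mp hpow
    exact (Nat.prime_iff_prime_int.mp hp).not_dvd_one hone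
  · refine ⟨y, ?_⟩
    simpa [pow_sub_one_mul hp.ne_zero] using (hy.mul_right y).symm

theorem mul_modEq_sub_of_modEq_one_sub_mul {q m n ninv x : ℤ} (hninv : n * ninv ≡ 1 [ZMOD q])
    (hx : x ≡ 1 - m * ninv [ZMOD q]) : n * x ≡ n - m [ZMOD q] := calc
  n * x ≡ n * (1 - m * ninv) [ZMOD q] := hx.mul_left n
  _ = n - m * (n * ninv) := by ring
  _ ≡ n - m * 1 [ZMOD q] := (hninv.mul_left m).sub_left n
  _ = n - m := by rw [mul_one]

theorem now_theyre_consecutive_general {p : ℕ} (hp : p.Prime) (hodd : Odd p) {ε : ℤ}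
    (hε : ε ^ (p - 1) ≡ 1 [ZMOD (p : ℤ) ^ 2]) {m n : ℕ} (hmn : m < n)
    (hpm : ¬ (p : ℤ) ∣ m) (hD : (p : ℤ) ^ 2 ∣ trinomialD ε n m)
    {ninv : ℤ} (hninv : n * ninv ≡ 1 [ZMOD p])
    {x : ℤ} (hxpow : x ^ (p - 1) ≡ 1 [ZMOD (p : ℤ) ^ 2]) (hx : x ≡ 1 - m * ninv [ZMOD p])
    {k : ℕ} (hk : (k : ℤ) ≡ m - n [ZMOD (p : ℤ) - 1]) :
    x ^ k ≡ -ε * (1 - x) ^ m [ZMOD (p : ℤ) ^ 2] ∧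
      (¬ (p : ℤ) ∣ (x - 1) ∧ ∃ a : ℤ, x - 1 ≡ a ^ p [ZMOD (p : ℤ) ^ 2]) := by
  have hm : m ≠ 0 := by rintro rfl; exact hpm (dvd_zero _)
  have hcop : IsCoprime (p : ℤ) n := by
    obtain ⟨d, hd⟩ := hninv.dvd
    exact ⟨d, ninv, by linear_combination -hd⟩
  have hnx := mul_modEq_sub_of_modEq_one_sub_mul hninv hx
  have hinv : x ^ k * x ^ (n - m) ≡ 1 [ZMOD (p : ℤ) ^ 2] := by
    obtain ⟨d, hd⟩ : p - 1 ∣ k + (n - m) := by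
      zify [hp.one_le, hmn.le]
      convert hk.symm.dvd using 1
      ring
    simpa [← pow_add, hd, pow_mul] using hxpow.pow d
  have hxk := pow_modEq_neg_mul_one_sub_pow hm hmn hcop hD hnx hinv
  have heven : Even (p - 1) := hodd.tsub_odd odd_one
  have hpow : ((1 - x) ^ m) ^ (p - 1) ≡ 1 [ZMOD (p : ℤ) ^ 2] := calc
    ((1 - x) ^ m) ^ (p - 1) = 1 * ((1 - x) ^ m) ^ (p - 1) := (one_mul _).symm
    _ ≡ ε ^ (p - 1) * ((1 - x) ^ m) ^ (p - 1) [ZMOD (p : ℤ) ^ 2] := hε.symm.mul_right _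
    _ = (-ε * (1 - x) ^ m) ^ (p - 1) := by rw [mul_pow, heven.neg_pow]
    _ ≡ (x ^ k) ^ (p - 1) [ZMOD (p : ℤ) ^ 2] := (hxk.pow _).symm
    _ = (x ^ (p - 1)) ^ k := pow_right_comm _ _ _
    _ ≡ 1 [ZMOD (p : ℤ) ^ 2] := by simpa using hxpow.pow k
  have hone_sub := pow_sub_one_modEq_one_of_pow hp (by exact_mod_cast hpm) hpow
  rw [← neg_sub, heven.neg_pow] at hone_sub
  exact ⟨hxk, not_dvd_and_exists_modEq_pow hp hone_sub⟩

/-- Let `p` be an odd prime and suppose `p² ∣ D_ε(n,m)` with `p ∤ m`, `p ∤ n`.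
Let `x` be the unique `p`-th power modulo `p²` (equivalently, `x^(p−1) ≡ 1 (mod p²)`)
with `x ≡ 1 − m·n⁻¹ (mod p)`, and let `k > 0` satisfy `k ≡ m − n (mod p−1)`.
Then `x^k ≡ −ε·(1−x)^m (mod p²)`; in particular `x − 1` is also a nonzero `p`-th power
modulo `p²`, so `x − 1` and `x` are consecutive nonzero `p`-th powers modulo `p²`. -/
theorem now_theyre_consecutive (p : ℕ) (hp : p.Prime) (hodd : Odd p)
    (ε : ℤ) (hε : ε = 1 ∨ ε = -1)
    (m n : ℕ) (hm : 0 < m) (hmn : m < n)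
    (hpm : ¬ (p : ℤ) ∣ (m : ℤ)) (hpn : ¬ (p : ℤ) ∣ (n : ℤ))
    (hD : (p : ℤ) ^ 2 ∣ trinomialD ε n m)
    (ninv : ℤ) (hninv : (n : ℤ) * ninv ≡ 1 [ZMOD ((p : ℤ) ^ 2)])
    (x : ℤ) (hxpow : x ^ (p - 1) ≡ 1 [ZMOD ((p : ℤ) ^ 2)])
    (hx : x ≡ 1 - (m : ℤ) * ninv [ZMOD (p : ℤ)])
    (k : ℕ) (hk0 : 0 < k) (hk : (k : ℤ) ≡ (m : ℤ) - (n : ℤ) [ZMOD ((p : ℤ) - 1)]) :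
    x ^ k ≡ -ε * (1 - x) ^ m [ZMOD ((p : ℤ) ^ 2)] ∧
      (¬ (p : ℤ) ∣ (x - 1) ∧ ∃ a : ℤ, x - 1 ≡ a ^ p [ZMOD ((p : ℤ) ^ 2)]) := by
  have hεpow : ε ^ (p - 1) = 1 := by rcases hε with rfl | rfl <;> simp [hodd.tsub_odd odd_one]
  exact now_theyre_consecutive_general hp hodd (by rw [hεpow]) hmn hpm hD
    (hninv.of_dvd (dvd_pow_self _ two_ne_zero)) hxpow hx hk
end

section
/- Let k be a positive integer, set n = 8^(7^k), and define a = (n−1)^(n−1), b = n^n − (n−1)^(n−1), and c = n^n. Then a, b, c are pairwise relatively prime positive integers with a + b = c, the radical of abc satisfies rad(abc) < 6b/(7^k·n), and consequently rad(abc) < 6·(log 8)·c/ log c. -/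
/-- The radical of a positive integer: the product of its distinct prime factors. -/
def rad (N : ℕ) : ℕ := N.primeFactors.prod id

/-!
For `n = 6t + 2` put `n² - n + 1 = 3m`. Since `n³ + 1` and `(n - 1)³ - 1` are both multiples of
`3m`, one can expand `n ^ n` and `(n - 1) ^ (n - 1)` to first order in `3m`. As `6t = n - 2`, the
first-order terms of the difference `b` collapse to `3m²` modulo `9m²`; hence `m² ∣ b` and
`rad b ≤ b / m`. If moreover `d ^ (k + 1) ∣ n - 1`, then `rad (n - 1) ≤ (n - 1) / d ^ k`, and
`n (n - 1) < 3m` gives `rad (abc) < 3 rad(n) b / (d ^ k n)`. For `n = 8 ^ 7 ^ k` one takes `d = 7`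
and has `rad n = 2`.
-/

open UniqueFactorizationMonoid

theorem pow_mul_radical_dvd {M : Type*} [CommMonoidWithZero M] [NormalizationMonoid M]
    [UniqueFactorizationMonoid M] {d a : M} {k : ℕ} (h : d ^ (k + 1) ∣ a) :
    d ^ k * radical a ∣ a := by
  obtain ⟨r, rfl⟩ := h
  have hrad : radical (d ^ (k + 1) * r) ∣ d * r :=
    radical_mul_dvd.trans (mul_dvd_mul (radical_pow_dvd.trans radical_dvd_self) radical_dvd_self)
  rw [pow_succ, mul_assoc] at hrad ⊢
  exact mul_dvd_mul_left _ hrad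

theorem rad_eq_radical (N : ℕ) : rad N = radical N :=
  Nat.radical_eq_prod_primeFactors.symm

theorem rad_mul_le (M N : ℕ) : rad (M * N) ≤ rad M * rad N := by
  simp only [rad_eq_radical]
  exact Nat.le_of_dvd (Nat.mul_pos (Nat.radical_pos M) (Nat.radical_pos N)) radical_mul_dvd

theorem rad_pow (N : ℕ) {k : ℕ} (hk : k ≠ 0) : rad (N ^ k) = rad N := by
  simp only [rad_eq_radical, radical_pow N hk]

theorem rad_prime_pow {p k : ℕ} (hp : p.Prime) (hk : k ≠ 0) : rad (p ^ k) = p := by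
  rw [rad_eq_radical, radical_pow_of_prime hp.prime hk, normalize_eq]

theorem pow_mul_rad_le {d N k : ℕ} (hN : N ≠ 0) (h : d ^ (k + 1) ∣ N) : d ^ k * rad N ≤ N := by
  rw [rad_eq_radical]
  exact Nat.le_of_dvd hN.pos (pow_mul_radical_dvd h)

theorem sq_dvd_pow_six_mul_sub {R : Type*} [CommRing R] (x : R) (t : ℕ) :
    (x ^ 2 - x + 1) ^ 2 ∣ x ^ (6 * t) - (1 - 2 * t * (x + 1) * (x ^ 2 - x + 1)) := by
  have hcube : x ^ (6 * t) = (1 + -((x + 1) * (x ^ 2 - x + 1))) ^ (2 * t) := by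
    rw [show 6 * t = 3 * (2 * t) by ring, pow_mul, ← (even_two_mul t).neg_pow (x ^ 3)]
    ring
  have hdvd : (x ^ 2 - x + 1) ^ 2 ∣ (-((x + 1) * (x ^ 2 - x + 1))) ^ 2 :=
    pow_dvd_pow_of_dvd (dvd_neg.2 (dvd_mul_left _ _)) 2
  convert hdvd.trans (sq_dvd_add_pow_sub_sub (-((x + 1) * (x ^ 2 - x + 1))) 1 (2 * t)) using 1
  rw [hcube]
  push_cast
  ring

theorem sq_dvd_pow_sub_pred_pow {R : Type*} [CommRing R] {x m : R} {t : ℕ} (hx : x = 6 * t + 2)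
    (hm : 3 * m = x ^ 2 - x + 1) : m ^ 2 ∣ x ^ (6 * t + 2) - (x - 1) ^ (6 * t + 1) := by
  obtain ⟨q, hq⟩ := sq_dvd_pow_six_mul_sub x t
  -- The polynomial `x ^ 2 - x + 1` is invariant under `x ↦ 1 - x`.
  obtain ⟨r, hr⟩ := sq_dvd_pow_six_mul_sub (1 - x) t
  have heven : Even (6 * t) := Even.mul_right (by decide) t
  rw [show (1 - x) ^ 2 - (1 - x) + 1 = x ^ 2 - x + 1 by ring, ← neg_sub x 1, heven.neg_pow] at hr
  rw [← hm] at hq hr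
  have hx_pow : x ^ (6 * t) = 1 - 6 * t * (x + 1) * m + 9 * m ^ 2 * q := by
    linear_combination hq
  have hpred_pow : (x - 1) ^ (6 * t) = 1 + 6 * t * (x - 2) * m + 9 * m ^ 2 * r := by
    linear_combination hr
  refine ⟨3 - 3 * (x - 2) * (x + 3) + 9 * (x ^ 2 * q - (x - 1) * r), ?_⟩
  rw [pow_add, pow_succ (x - 1), hx_pow, hpred_pow]
  linear_combination m * (x ^ 3 + 2 * x ^ 2 - 3 * x + 2) * hx +
    (m * (x - 2) * (x + 3) - m - 1) * hm

theorem sq_dvd_pow_self_sub_pred_pow_pred {n m : ℕ} (hn : n % 6 = 2)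
    (hm : 3 * m = n * (n - 1) + 1) : m ^ 2 ∣ n ^ n - (n - 1) ^ (n - 1) := by
  obtain ⟨t, rfl⟩ : ∃ t, n = 6 * t + 2 := ⟨n / 6, by omega⟩
  rw [show 6 * t + 2 - 1 = 6 * t + 1 by omega] at hm ⊢
  have hmℤ : 3 * (m : ℤ) = (6 * t + 2) ^ 2 - (6 * t + 2) + 1 := by
    zify at hm
    rw [hm]
    ring
  have h := sq_dvd_pow_sub_pred_pow rfl hmℤ
  rw [show (6 * t + 2 - 1 : ℤ) = 6 * t + 1 by ring] at h
  have hle : (6 * t + 1) ^ (6 * t + 1) ≤ (6 * t + 2) ^ (6 * t + 2) := Nat.pow_self_mono (by omega)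
  zify [hle]
  exact h

theorem three_dvd_mul_pred_add_one {n : ℕ} (hn : n % 3 = 2) : 3 ∣ n * (n - 1) + 1 := by
  obtain ⟨t, rfl⟩ : ∃ t, n = 3 * t + 2 := ⟨n / 3, by omega⟩
  exact ⟨3 * t ^ 2 + 3 * t + 1, by rw [Nat.add_sub_assoc (by norm_num)]; ring⟩

theorem pred_pow_pred_lt_pow_self {n : ℕ} (hn : 1 < n) : (n - 1) ^ (n - 1) < n ^ n :=
  calc (n - 1) ^ (n - 1) < n ^ (n - 1) := Nat.pow_lt_pow_left (by omega) (by omega)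
    _ ≤ n ^ n := Nat.pow_le_pow_right (by omega) (by omega)

theorem coprime_pred_pow_pow {n : ℕ} (hn : 0 < n) (i j : ℕ) : Nat.Coprime ((n - 1) ^ i) (n ^ j) :=
  ((Nat.coprime_self_sub_left hn).2 (Nat.coprime_one_left n)).pow i j

theorem rad_pred_pow_mul_sub_mul_pow_lt {n d k : ℕ} (hn : n % 6 = 2) (hd : d ^ (k + 1) ∣ n - 1) :
    rad ((n - 1) ^ (n - 1) * (n ^ n - (n - 1) ^ (n - 1)) * n ^ n) * (d ^ k * n) <
      3 * rad n * (n ^ n - (n - 1) ^ (n - 1)) := by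
  obtain ⟨m, hm⟩ := three_dvd_mul_pred_add_one (n := n) (by omega)
  have hb : 0 < n ^ n - (n - 1) ^ (n - 1) :=
    Nat.sub_pos_of_lt (pred_pow_pred_lt_pow_self (by omega))
  have hsq := sq_dvd_pow_self_sub_pred_pow_pred hn hm.symm
  set b := n ^ n - (n - 1) ^ (n - 1)
  have hrad_a : d ^ k * rad (n - 1) ≤ n - 1 := pow_mul_rad_le (by omega) hd
  have hrad_b : m * rad b ≤ b := by simpa using pow_mul_rad_le (k := 1) hb.ne' hsq
  have hrad : rad ((n - 1) ^ (n - 1) * b * n ^ n) ≤ rad (n - 1) * rad b * rad n := by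
    rw [← rad_pow (n - 1) (show n - 1 ≠ 0 by omega), ← rad_pow n (show n ≠ 0 by omega)]
    exact (rad_mul_le _ _).trans (Nat.mul_le_mul_right _ (rad_mul_le _ _))
  have hn_pos : 0 < rad n := rad_eq_radical n ▸ Nat.radical_pos n
  have hm_pos : 0 < m := by omega
  refine lt_of_mul_lt_mul_left ?_ hm_pos.le
  calc m * (rad ((n - 1) ^ (n - 1) * b * n ^ n) * (d ^ k * n))
      ≤ m * (rad (n - 1) * rad b * rad n * (d ^ k * n)) := by gcongr
    _ = (d ^ k * rad (n - 1)) * (m * rad b) * (rad n * n) := by ring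
    _ ≤ (n - 1) * b * (rad n * n) := by gcongr
    _ = n * (n - 1) * (rad n * b) := by ring
    _ < 3 * m * (rad n * b) := Nat.mul_lt_mul_of_pos_right (by omega) (Nat.mul_pos hn_pos hb)
    _ = m * (3 * rad n * b) := by ring

theorem eight_pow_mod_six {j : ℕ} (hj : Odd j) : 8 ^ j % 6 = 2 := by
  obtain ⟨i, rfl⟩ := hj
  have h : 64 ^ i % 3 = 1 := by simpa [Nat.ModEq] using Nat.ModEq.pow i (show 64 ≡ 1 [MOD 3] by rfl)
  rw [pow_succ, pow_mul, show 8 ^ 2 = 64 by rfl]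
  omega

theorem pow_succ_dvd_succ_pow_pow_sub_one (d k : ℕ) : d ^ (k + 1) ∣ (d + 1) ^ d ^ k - 1 := by
  have h := dvd_sub_pow_of_dvd_sub (R := ℤ) (p := d) (a := d + 1) (b := 1) (by simp) k
  zify [Nat.one_le_pow (d ^ k) (d + 1) d.succ_pos]
  simpa using h

theorem rad_eight_pow {j : ℕ} (hj : j ≠ 0) : rad (8 ^ j) = 2 := by
  rw [show 8 = 2 ^ 3 by rfl, ← pow_mul, rad_prime_pow Nat.prime_two (mul_ne_zero three_ne_zero hj)]

theorem log_pow_pow_self (m j : ℕ) :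
    Real.log (((m ^ j) ^ m ^ j : ℕ) : ℝ) = j * (m ^ j : ℕ) * Real.log m := by
  push_cast
  rw [Real.log_pow, Real.log_pow]
  push_cast
  ring

/-- Let `k ≥ 1`, `n = 8^(7^k)`, `a = (n−1)^(n−1)`, `b = n^n − (n−1)^(n−1)`,
`c = n^n`.  Then `a`, `b`, `c` are pairwise relatively prime positive integers
with `a + b = c`, `rad(abc) < 6b/(7^k·n)`, and `rad(abc) < 6·(log 8)·c/log c`. -/
theorem abc_pomerance (k : ℕ) (hk : 0 < k) (n a b c : ℕ)
    (hn : n = 8 ^ (7 ^ k)) (ha : a = (n - 1) ^ (n - 1))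
    (hb : b = n ^ n - (n - 1) ^ (n - 1)) (hc : c = n ^ n) :
    Nat.Coprime a b ∧ Nat.Coprime a c ∧ Nat.Coprime b c ∧
      0 < a ∧ 0 < b ∧ 0 < c ∧ a + b = c ∧
      (rad (a * b * c) : ℝ) < 6 * b / (7 ^ k * n) ∧
      (rad (a * b * c) : ℝ) < 6 * Real.log 8 * c / Real.log c := by
  have hmod : n % 6 = 2 := hn ▸ eight_pow_mod_six (Odd.pow (by decide))
  have hlt : a < c := ha ▸ hc ▸ pred_pow_pred_lt_pow_self (by omega)
  have hbc : b = c - a := by rw [hb, ha, hc]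
  have hab : a + b = c := by omega
  have ha_pos : 0 < a := ha ▸ Nat.pow_pos (by omega)
  have hcop_ac : Nat.Coprime a c := ha ▸ hc ▸ coprime_pred_pow_pow (by omega) _ _
  have hcop_ab : Nat.Coprime a b := by simpa [← hab] using hcop_ac
  have hrad : rad (a * b * c) * (7 ^ k * n) < 6 * b := by
    have h := rad_pred_pow_mul_sub_mul_pow_lt hmod (hn ▸ pow_succ_dvd_succ_pow_pow_sub_one 7 k)
    rwa [← hb, ← ha, ← hc, hn, rad_eight_pow (by positivity), ← hn] at h
  have hn_pos : 0 < n := by omega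
  have hfirst : (rad (a * b * c) : ℝ) < 6 * b / (7 ^ k * n) := by
    rw [lt_div_iff₀ (by positivity)]
    exact_mod_cast hrad
  have hlog : Real.log c = 7 ^ k * n * Real.log 8 := by
    rw [hc, hn, log_pow_pow_self]
    push_cast
    rfl
  refine ⟨hcop_ab, hcop_ac, by simpa [← hab] using hcop_ab.symm, ha_pos, by omega, by omega, hab,
    hfirst, hfirst.trans ?_⟩
  rw [hlog, mul_right_comm 6, mul_div_mul_right _ _ (Real.log_pos (by norm_num)).ne']
  gcongr
  omega
end
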